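/- Let G be a finite simple connected C-canonical graph of order n and diameter d with d ≡ 1 (mod 3) and m_G(−1) = n − d − 1, and let P = v_1 v_2 ⋯ v_{d+1} be a diameter path of G. Then: (i) if u is a vertex not on P adjacent to exactly the two consecutive vertices v_m and v_{m+1} of P, then m ≡ 1 (mod 3); (ii) no vertex not on P with exactly one neighbor on P is adjacent to a vertex not on P with exactly two neighbors on P; and (iii) any two distinct vertices not on P each having exactly two neighbors on P are non-adjacent. -/

import Mathlib

attribute [local instance] Classical.propDecidable

/-- The multiplicity of `-1` as an eigenvalue of the adjacency matrix of `G`,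
i.e. the dimension over `ℝ` of the kernel of `A + I`. -/
noncomputable def multNegOne {V : Type*} [Fintype V] (G : SimpleGraph V) : ℕ :=
  Module.finrank ℝ (LinearMap.ker (Matrix.toLin' (G.adjMatrix ℝ + 1)))

/-- The set of indices `i ∈ {1, …, d+1}` such that `x` is adjacent to the vertex `v i`
of the diameter path `v 1, v 2, …, v (d+1)`. -/
noncomputable def pathNbrs {V : Type*} (G : SimpleGraph V) (d : ℕ) (v : ℕ → V) (x : V) :
    Finset ℕ :=
  (Finset.Icc 1 (d + 1)).filter fun i => G.Adj x (v i)

/-!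
Write `M = A + I`. As `d ≡ 1 (mod 3)`, the rows and columns of `M` on the path `P` have the kernel
vector `z = (1, -1, 0, 1, -1, 0, …, 1, -1)` and rank `d`, while `M` has rank `d + 1`. Hence the
vectors `f` for which `M f` vanishes on `v 1, …, v d` have proportional images, so that
`(f ⬝ M g)² = (f ⬝ M f) (g ⬝ M g)` for any two of them, and those `g` with `M g = 0` on all of `P`
and `g ⬝ M g = 0` lie in the kernel of `M`.

For `g = z` this says that every vertex off `P` has as many neighbours `v i` with `i ≡ 1` as with
`i ≡ 2`, which fixes the residue of `m` in the neighbourhoods `{m}`, `{m, m + 1}`, `{m, m + 2}` to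
be `0`, `1`, `2`. For `g = e_u - e_w` it says that adjacent vertices with the same neighbours on `P`
are twins. In the three cases, subtracting an explicit vector on `P` from `e_u` gives `f_u` with
`M f_u = 0` on `P` and `f_u ⬝ M f_u = 1`, `0`, `2`, and for adjacent `u` and `w` the values of
`f_u ⬝ M f_w` violate the identity above.
-/

open scoped Matrix

section LinearAlgebra

variable {K ι n : Type*} [Field K] [Fintype ι] [Fintype n]

lemma exists_forall_eq_smul_of_surjective {E F : Type*} [AddCommGroup E] [Module K E]
    [FiniteDimensional K E] [AddCommGroup F] [Module K F] {ρ : E →ₗ[K] F}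
    (hsurj : Function.Surjective ρ) (hrank : Module.finrank K E ≤ Module.finrank K F + 1) :
    ∃ k : E, ∀ x, ρ x = 0 → ∃ c : K, x = c • k := by
  have hker : Module.finrank K (LinearMap.ker ρ) ≤ 1 := by
    have h := ρ.finrank_range_add_finrank_ker
    rw [LinearMap.range_eq_top.2 hsurj, finrank_top] at h
    omega
  obtain ⟨k, hk⟩ := finrank_le_one_iff.1 hker
  refine ⟨k, fun x hx => ?_⟩
  obtain ⟨c, hc⟩ := hk ⟨x, hx⟩
  exact ⟨c, congrArg Subtype.val hc.symm⟩

lemma exists_forall_mulVec_eq_smul {m : Type*} [Finite m] {M : Matrix m n K} {r : ι → m}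
    (hrank : M.rank ≤ Fintype.card ι + 1)
    (hsurj : ∀ c : ι → K, ∃ y, ∀ i, (M *ᵥ y) (r i) = c i) :
    ∃ k : m → K, ∀ f, (∀ i, (M *ᵥ f) (r i) = 0) → ∃ c : K, M *ᵥ f = c • k := by
  let restrict : LinearMap.range M.mulVecLin →ₗ[K] (ι → K) :=
    LinearMap.funLeft K K r ∘ₗ Submodule.subtype _
  have hrestrict : Function.Surjective restrict := fun c => by
    obtain ⟨y, hy⟩ := hsurj c
    exact ⟨⟨M *ᵥ y, y, rfl⟩, funext hy⟩
  rw [← Module.finrank_fintype_fun_eq_card K] at hrank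
  obtain ⟨k, hk⟩ := exists_forall_eq_smul_of_surjective hrestrict hrank
  refine ⟨k, fun f hf => ?_⟩
  obtain ⟨c, hc⟩ := hk ⟨M *ᵥ f, f, rfl⟩ (funext hf)
  exact ⟨c, congrArg Subtype.val hc⟩

lemma sq_dotProduct_mulVec_eq_of_rank_le {M : Matrix n n K} {r : ι → n} (hsymm : M.IsSymm)
    (hrank : M.rank ≤ Fintype.card ι + 1)
    (hsurj : ∀ c : ι → K, ∃ y, ∀ i, (M *ᵥ y) (r i) = c i) {f g : n → K}
    (hf : ∀ i, (M *ᵥ f) (r i) = 0) (hg : ∀ i, (M *ᵥ g) (r i) = 0) :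
    (f ⬝ᵥ M *ᵥ g) ^ 2 = (f ⬝ᵥ M *ᵥ f) * (g ⬝ᵥ M *ᵥ g) := by
  obtain ⟨k, hk⟩ := exists_forall_mulVec_eq_smul hrank hsurj
  obtain ⟨a, ha⟩ := hk f hf
  obtain ⟨b, hb⟩ := hk g hg
  have hcomm : f ⬝ᵥ M *ᵥ g = g ⬝ᵥ M *ᵥ f := by
    rw [Matrix.dotProduct_mulVec, ← Matrix.mulVec_transpose, hsymm.eq, dotProduct_comm]
  calc (f ⬝ᵥ M *ᵥ g) ^ 2 = (f ⬝ᵥ M *ᵥ g) * (g ⬝ᵥ M *ᵥ f) := by rw [sq, ← hcomm]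
    _ = (f ⬝ᵥ M *ᵥ f) * (g ⬝ᵥ M *ᵥ g) := by
      rw [ha, hb]
      simp only [dotProduct_smul, smul_eq_mul]
      ring

end LinearAlgebra

lemma exists_add_add_eq {A : Type*} [AddCommGroup A] (c : ℕ → A) :
    ∃ a : ℕ → A, a 0 = 0 ∧ ∀ k, a k + a (k + 1) + a (k + 2) = c k := by
  let pairs : ℕ → A × A := Nat.rec (0, 0) fun k p => (p.2, c k - p.1 - p.2)
  refine ⟨fun k => (pairs k).1, rfl, fun k => ?_⟩
  change (pairs k).1 + (pairs k).2 + (c k - (pairs k).1 - (pairs k).2) = c k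
  abel

lemma sum_Icc_ite_eq_add_add {A : Type*} [AddCommMonoid A] (a : ℕ → A)
    (ha : a 0 = 0) {d k : ℕ} (hk : k ≤ d)
    (hlast : k = d → a (d + 2) = 0) :
    ∑ i ∈ Finset.Icc 1 (d + 1), (if k + 1 = i ∨ k + 2 = i ∨ i = k then a i else 0) =
      a k + a (k + 1) + a (k + 2) := by
  have hsplit (i : ℕ) : (if k + 1 = i ∨ k + 2 = i ∨ i = k then a i else 0) =
      (if k = i then a i else 0) + (if k + 1 = i then a i else 0) +
        if k + 2 = i then a i else 0 := by
    grind
  simp only [hsplit, Finset.sum_add_distrib, Finset.sum_ite_eq, Finset.mem_Icc]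
  grind

section Alternating

/-- The sequence `0, 1, -1, 0, 1, -1, …`, whose entries `1, …, d + 1` form an eigenvector of the
path on `d + 1` vertices for the eigenvalue `-1` when `d ≡ 1 (mod 3)`. -/
def alternating (i : ℕ) : ℝ :=
  if i % 3 = 1 then 1 else if i % 3 = 2 then -1 else 0

/-- The sequence `alternating`, cut off after the index `m`. It serves to solve
`a k + a (k + 1) + a (k + 2) = c k` for the `c` given by the neighbours of a vertex on a path. -/
def alternatingUpTo (m i : ℕ) : ℝ :=
  if i ≤ m then alternating i else 0

lemma alternatingUpTo_zero (m : ℕ) : alternatingUpTo m 0 = 0 := by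
  simp [alternatingUpTo, alternating]

lemma alternatingUpTo_of_lt {m i : ℕ} (h : m < i) : alternatingUpTo m i = 0 :=
  if_neg h.not_ge

lemma alternating_add_add (k : ℕ) :
    alternating k + alternating (k + 1) + alternating (k + 2) = 0 := by
  grind [alternating]

lemma alternatingUpTo_add_add_of_mod_eq_zero {m : ℕ} (hm : m % 3 = 0) (k : ℕ) :
    alternatingUpTo m k + alternatingUpTo m (k + 1) + alternatingUpTo m (k + 2) =
      if k + 1 = m then -1 else 0 := by
  grind [alternatingUpTo, alternating]

lemma alternatingUpTo_add_add_of_mod_eq_one {m : ℕ} (hm : m % 3 = 1) (k : ℕ) :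
    alternatingUpTo m k + alternatingUpTo m (k + 1) + alternatingUpTo m (k + 2) =
      if k + 1 = m ∨ k + 1 = m + 1 then 1 else 0 := by
  grind [alternatingUpTo, alternating]

lemma alternatingUpTo_add_add_of_mod_eq_two {m : ℕ} (hm : m % 3 = 2) (k : ℕ) :
    alternatingUpTo m k + alternatingUpTo m (k + 1) + alternatingUpTo m (k + 2) =
      if k = m then -1 else 0 := by
  grind [alternatingUpTo, alternating]

lemma one_sub_sum_alternatingUpTo_add_ite {m j : ℕ} (hm : m % 3 = 2) (hj : j % 3 = 2) :
    1 - ∑ i ∈ ({j, j + 2} : Finset ℕ), (alternatingUpTo m i + if i = m + 1 then 1 else 0) =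
      if m = j then 2 else 1 := by
  rw [Finset.sum_pair (by omega)]
  grind [alternatingUpTo, alternating]

end Alternating

/-- The matrix `A + I` of `G`, with rows and columns given by closed neighbourhoods. -/
noncomputable def closedAdjMatrix {V : Type*} [Fintype V] (G : SimpleGraph V) : Matrix V V ℝ :=
  G.adjMatrix ℝ + 1

/-- The graph `G` is C-canonical: distinct vertices have distinct closed neighbourhoods. -/
def IsCCanonical {V : Type*} (G : SimpleGraph V) : Prop :=
  ∀ a b : V, (∀ z : V, (z = a ∨ G.Adj a z) ↔ (z = b ∨ G.Adj b z)) → a = b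

/-- `v 1, …, v (d + 1)` is a geodesic path of length `d` in `G`. The other values of `v` play no
role. -/
def IsGeodesicPath {V : Type*} (G : SimpleGraph V) (d : ℕ) (v : ℕ → V) : Prop :=
  ∀ i ∈ Finset.Icc 1 (d + 1), ∀ j ∈ Finset.Icc 1 (d + 1), G.dist (v i) (v j) = max i j - min i j

/-- `v 1, …, v (d + 1)` is an induced path of length `d` in `G`. The other values of `v` play no
role. -/
structure IsInducedPath {V : Type*} (G : SimpleGraph V) (d : ℕ) (v : ℕ → V) : Prop where
  injOn : Set.InjOn v (Finset.Icc 1 (d + 1) : Finset ℕ)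
  adj_iff : ∀ i ∈ Finset.Icc 1 (d + 1), ∀ j ∈ Finset.Icc 1 (d + 1),
    G.Adj (v i) (v j) ↔ i + 1 = j ∨ j + 1 = i

/-- The vertex `u` is not on the path `v 1, …, v (d + 1)`. -/
def IsOffPath {V : Type*} (d : ℕ) (v : ℕ → V) (u : V) : Prop :=
  ∀ i ∈ Finset.Icc 1 (d + 1), u ≠ v i

/-- The vector `x` vanishes on the vertices `v 1, …, v (d + 1)`. -/
def VanishesOnPath {V : Type*} (d : ℕ) (v : ℕ → V) (x : V → ℝ) : Prop :=
  ∀ k ≤ d, x (v (k + 1)) = 0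

/-- The linear combination of the standard vectors at `v 1, …, v (d + 1)` with coefficients
`a 1, …, a (d + 1)`. -/
noncomputable def pathVec {V : Type*} (d : ℕ) (v : ℕ → V) (a : ℕ → ℝ) : V → ℝ :=
  ∑ i ∈ Finset.Icc 1 (d + 1), a i • Pi.single (v i) 1

/-- The sequence `a` satisfies `(A + I) a = c` on a path with vertices `1, …, d + 1`, where `c` is
the indicator of the neighbours of `u`. The values `a 0` and `a (d + 2)` next to the ends of the
path are set to `0`, so that the equation has the same form at every vertex of the path. -/
structure IsPathSolution {V : Type*} (G : SimpleGraph V) (d : ℕ) (v : ℕ → V) (u : V) (a : ℕ → ℝ) :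
    Prop where
  zero : a 0 = 0
  last : a (d + 2) = 0
  add_add : ∀ k ≤ d, a k + a (k + 1) + a (k + 2) = if k + 1 ∈ pathNbrs G d v u then 1 else 0

section Path

variable {V : Type*} {G : SimpleGraph V} {d : ℕ} {v : ℕ → V} {u w : V} {a b : ℕ → ℝ} {m j : ℕ}

lemma mem_pathNbrs {i : ℕ} :
    i ∈ pathNbrs G d v u ↔ i ∈ Finset.Icc 1 (d + 1) ∧ G.Adj u (v i) :=
  Finset.mem_filter

lemma le_of_mem_pathNbrs {i : ℕ} (hi : i ∈ pathNbrs G d v u) : i ≤ d + 1 :=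
  (Finset.mem_Icc.1 (mem_pathNbrs.1 hi).1).2

lemma IsGeodesicPath.isInducedPath (hP : IsGeodesicPath G d v) : IsInducedPath G d v where
  injOn i hi j hj hij := by
    have h := hP i hi j hj
    rw [hij, SimpleGraph.dist_self] at h
    omega
  adj_iff i hi j hj := by
    rw [← SimpleGraph.dist_eq_one_iff_adj, hP i hi j hj]
    omega

lemma IsGeodesicPath.le_add_two_of_mem_pathNbrs (hP : IsGeodesicPath G d v) {i : ℕ}
    (hi : i ∈ pathNbrs G d v u) (hj : j ∈ pathNbrs G d v u) : j ≤ i + 2 := by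
  obtain ⟨hi, hui⟩ := mem_pathNbrs.1 hi
  obtain ⟨hj, huj⟩ := mem_pathNbrs.1 hj
  have h : G.dist (v i) (v j) ≤ 2 := SimpleGraph.dist_le (.cons hui.symm (.cons huj .nil))
  rw [hP i hi j hj] at h
  omega

lemma IsGeodesicPath.exists_pathNbrs_eq_of_card_eq_two (hP : IsGeodesicPath G d v)
    (h : (pathNbrs G d v u).card = 2) :
    ∃ m, pathNbrs G d v u = {m, m + 1} ∨ pathNbrs G d v u = {m, m + 2} := by
  obtain ⟨i, j, hij, hu⟩ := Finset.card_eq_two.1 h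
  wlog hlt : i < j generalizing i j
  · exact this j i hij.symm (by rw [hu, Finset.pair_comm]) (by omega)
  have hle : j ≤ i + 2 := hP.le_add_two_of_mem_pathNbrs (u := u) (by simp [hu]) (by simp [hu])
  obtain rfl | rfl : j = i + 1 ∨ j = i + 2 := by omega
  exacts [⟨i, .inl hu⟩, ⟨i, .inr hu⟩]

lemma isPathSolution_of_pathNbrs_eq_singleton (hN : pathNbrs G d v u = {m}) (hm : m % 3 = 0) :
    IsPathSolution G d v u (fun i => -alternatingUpTo m i) where
  zero := by rw [alternatingUpTo_zero, neg_zero]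
  last := by
    have hmd := le_of_mem_pathNbrs (by simp [hN] : m ∈ pathNbrs G d v u)
    rw [alternatingUpTo_of_lt (by omega), neg_zero]
  add_add k _ := by
    have h := alternatingUpTo_add_add_of_mod_eq_zero hm k
    simp only [hN, Finset.mem_singleton]
    grind

lemma isPathSolution_of_pathNbrs_eq_pair_succ (hN : pathNbrs G d v u = {m, m + 1})
    (hm : m % 3 = 1) : IsPathSolution G d v u (alternatingUpTo m) where
  zero := alternatingUpTo_zero m
  last := by
    have hmd := le_of_mem_pathNbrs (by simp [hN] : m ∈ pathNbrs G d v u)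
    exact alternatingUpTo_of_lt (by omega)
  add_add k _ := by
    simp only [hN, Finset.mem_insert, Finset.mem_singleton,
      alternatingUpTo_add_add_of_mod_eq_one hm]

lemma isPathSolution_of_pathNbrs_eq_pair_add_two (hN : pathNbrs G d v u = {m, m + 2})
    (hm : m % 3 = 2) :
    IsPathSolution G d v u (fun i => alternatingUpTo m i + if i = m + 1 then 1 else 0) where
  zero := by simp [alternatingUpTo_zero]
  last := by
    have hmd := le_of_mem_pathNbrs (by simp [hN] : m + 2 ∈ pathNbrs G d v u)
    rw [alternatingUpTo_of_lt (by omega), if_neg (by omega), add_zero]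
  add_add k _ := by
    have h := alternatingUpTo_add_add_of_mod_eq_two hm k
    simp only [hN, Finset.mem_insert, Finset.mem_singleton]
    grind

variable [Fintype V]

lemma closedAdjMatrix_apply (u w : V) :
    closedAdjMatrix G u w = if u = w ∨ G.Adj u w then 1 else 0 := by
  by_cases h : u = w <;> simp [closedAdjMatrix, h]

lemma isSymm_closedAdjMatrix : (closedAdjMatrix G).IsSymm :=
  G.isSymm_adjMatrix.add Matrix.isSymm_one

lemma rank_closedAdjMatrix_add_multNegOne :
    (closedAdjMatrix G).rank + multNegOne G = Fintype.card V := by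
  have h := (Matrix.toLin' (G.adjMatrix ℝ + 1)).finrank_range_add_finrank_ker
  rwa [Module.finrank_fintype_fun_eq_card] at h

lemma closedAdjMatrix_mulVec_single_apply (u w : V) :
    (closedAdjMatrix G *ᵥ Pi.single u 1) w = if w = u ∨ G.Adj w u then 1 else 0 := by
  rw [Matrix.mulVec_single_one, Matrix.col_apply, closedAdjMatrix_apply]

lemma closedAdjMatrix_mulVec_pathVec_apply (a : ℕ → ℝ) (w : V) :
    (closedAdjMatrix G *ᵥ pathVec d v a) w =
      ∑ i ∈ Finset.Icc 1 (d + 1), if w = v i ∨ G.Adj w (v i) then a i else 0 := by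
  simp only [pathVec, Matrix.mulVec_sum, Matrix.mulVec_smul, Finset.sum_apply, Pi.smul_apply,
    closedAdjMatrix_mulVec_single_apply, smul_eq_mul, mul_ite, mul_one, mul_zero]

lemma closedAdjMatrix_mulVec_pathVec_apply_of_isOffPath (a : ℕ → ℝ) (hw : IsOffPath d v w) :
    (closedAdjMatrix G *ᵥ pathVec d v a) w = ∑ i ∈ pathNbrs G d v w, a i := by
  rw [closedAdjMatrix_mulVec_pathVec_apply, pathNbrs, Finset.sum_filter]
  refine Finset.sum_congr rfl fun i hi => ?_
  simp only [hw i hi, false_or]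

lemma IsOffPath.closedAdjMatrix_mulVec_single_apply_path (hu : IsOffPath d v u) {k : ℕ}
    (hk : k ≤ d) :
    (closedAdjMatrix G *ᵥ Pi.single u 1) (v (k + 1)) =
      if k + 1 ∈ pathNbrs G d v u then 1 else 0 := by
  have hk' : k + 1 ∈ Finset.Icc 1 (d + 1) := Finset.mem_Icc.2 ⟨by omega, by omega⟩
  simp only [closedAdjMatrix_mulVec_single_apply, mem_pathNbrs, (hu _ hk').symm, hk',
    false_or, true_and, G.adj_comm u]

lemma IsInducedPath.closedAdjMatrix_mulVec_pathVec_apply_path (hP : IsInducedPath G d v)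
    (ha : a 0 = 0) {k : ℕ} (hk : k ≤ d) (hlast : k = d → a (d + 2) = 0) :
    (closedAdjMatrix G *ᵥ pathVec d v a) (v (k + 1)) = a k + a (k + 1) + a (k + 2) := by
  have hk' : k + 1 ∈ Finset.Icc 1 (d + 1) := Finset.mem_Icc.2 ⟨by omega, by omega⟩
  rw [closedAdjMatrix_mulVec_pathVec_apply, ← sum_Icc_ite_eq_add_add a ha hk hlast]
  refine Finset.sum_congr rfl fun i hi => ?_
  simp only [hP.injOn.eq_iff hk' hi, hP.adj_iff _ hk' i hi, add_assoc, Nat.reduceAdd,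
    add_left_inj]

lemma VanishesOnPath.pathVec_dotProduct {x : V → ℝ} (hx : VanishesOnPath d v x) (a : ℕ → ℝ) :
    pathVec d v a ⬝ᵥ x = 0 := by
  rw [pathVec, sum_dotProduct]
  refine Finset.sum_eq_zero fun i hi => ?_
  obtain ⟨hi1, hid⟩ := Finset.mem_Icc.1 hi
  obtain ⟨k, rfl⟩ := Nat.exists_eq_add_of_le' hi1
  rw [smul_dotProduct, single_one_dotProduct, hx k (by omega), smul_zero]

lemma VanishesOnPath.single_sub_pathVec_dotProduct {x : V → ℝ} (hx : VanishesOnPath d v x)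
    (u : V) (a : ℕ → ℝ) : (Pi.single u 1 - pathVec d v a) ⬝ᵥ x = x u := by
  rw [sub_dotProduct, hx.pathVec_dotProduct, single_one_dotProduct, sub_zero]

lemma IsInducedPath.exists_mulVec_pathVec_eq (hP : IsInducedPath G d v) (c : ℕ → ℝ) :
    ∃ a : ℕ → ℝ, ∀ k < d, (closedAdjMatrix G *ᵥ pathVec d v a) (v (k + 1)) = c k := by
  obtain ⟨a, ha0, ha⟩ := exists_add_add_eq c
  refine ⟨a, fun k hk => ?_⟩
  rw [hP.closedAdjMatrix_mulVec_pathVec_apply_path ha0 hk.le (fun h => absurd h hk.ne), ha]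

lemma IsPathSolution.vanishesOnPath (ha : IsPathSolution G d v u a) (hP : IsInducedPath G d v)
    (hu : IsOffPath d v u) :
    VanishesOnPath d v (closedAdjMatrix G *ᵥ (Pi.single u 1 - pathVec d v a)) := fun k hk => by
  rw [Matrix.mulVec_sub, Pi.sub_apply, hu.closedAdjMatrix_mulVec_single_apply_path hk,
    hP.closedAdjMatrix_mulVec_pathVec_apply_path ha.zero hk fun _ => ha.last,
    ha.add_add k hk, sub_self]

lemma closedAdjMatrix_mulVec_single_sub_pathVec_apply (a : ℕ → ℝ) (hw : IsOffPath d v w)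
    (h : w = u ∨ G.Adj w u) :
    (closedAdjMatrix G *ᵥ (Pi.single u 1 - pathVec d v a)) w =
      1 - ∑ i ∈ pathNbrs G d v w, a i := by
  rw [Matrix.mulVec_sub, Pi.sub_apply, closedAdjMatrix_mulVec_single_apply, if_pos h,
    closedAdjMatrix_mulVec_pathVec_apply_of_isOffPath a hw]

lemma IsPathSolution.dotProduct_mulVec_eq (ha : IsPathSolution G d v u a)
    (hP : IsInducedPath G d v) (hu : IsOffPath d v u) (hw : IsOffPath d v w)
    (h : w = u ∨ G.Adj w u) (b : ℕ → ℝ) :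
    (Pi.single w 1 - pathVec d v b) ⬝ᵥ closedAdjMatrix G *ᵥ (Pi.single u 1 - pathVec d v a) =
      1 - ∑ i ∈ pathNbrs G d v w, a i := by
  rw [(ha.vanishesOnPath hP hu).single_sub_pathVec_dotProduct,
    closedAdjMatrix_mulVec_single_sub_pathVec_apply a hw h]

section Rank

variable (hP : IsInducedPath G d v) (hrank : (closedAdjMatrix G).rank ≤ d + 1)

include hP hrank

lemma IsInducedPath.sq_dotProduct_mulVec_eq {f g : V → ℝ}
    (hf : ∀ k < d, (closedAdjMatrix G *ᵥ f) (v (k + 1)) = 0)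
    (hg : ∀ k < d, (closedAdjMatrix G *ᵥ g) (v (k + 1)) = 0) :
    (f ⬝ᵥ closedAdjMatrix G *ᵥ g) ^ 2 =
      (f ⬝ᵥ closedAdjMatrix G *ᵥ f) * (g ⬝ᵥ closedAdjMatrix G *ᵥ g) := by
  refine sq_dotProduct_mulVec_eq_of_rank_le (r := fun i : Fin d => v (i + 1)) isSymm_closedAdjMatrix
    (by rwa [Fintype.card_fin]) (fun c => ?_) (fun i => hf i i.2) (fun i => hg i i.2)
  obtain ⟨a, ha⟩ := hP.exists_mulVec_pathVec_eq fun k => if hk : k < d then c ⟨k, hk⟩ else 0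
  exact ⟨pathVec d v a, fun i => by rw [ha i i.2, dif_pos i.2]⟩

lemma IsInducedPath.mulVec_eq_zero_of_dotProduct_eq_zero {g : V → ℝ}
    (hg : VanishesOnPath d v (closedAdjMatrix G *ᵥ g))
    (hgg : g ⬝ᵥ closedAdjMatrix G *ᵥ g = 0) : closedAdjMatrix G *ᵥ g = 0 := by
  funext x
  obtain ⟨a, ha⟩ := hP.exists_mulVec_pathVec_eq
    fun k => (closedAdjMatrix G *ᵥ Pi.single x 1) (v (k + 1))
  have h := hP.sq_dotProduct_mulVec_eq hrank (f := Pi.single x 1 - pathVec d v a)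
    (fun k hk => by rw [Matrix.mulVec_sub, Pi.sub_apply, ha k hk, sub_self])
    (fun k hk => hg k hk.le)
  rwa [hgg, mul_zero, hg.single_sub_pathVec_dotProduct, sq_eq_zero_iff] at h

lemma IsInducedPath.sum_pathNbrs_alternating_eq_zero (hd : d % 3 = 1) (hu : IsOffPath d v u) :
    ∑ i ∈ pathNbrs G d v u, alternating i = 0 := by
  have hlast : alternating (d + 2) = 0 := by
    rw [alternating, if_neg (by omega), if_neg (by omega)]
  have hvanish : VanishesOnPath d v (closedAdjMatrix G *ᵥ pathVec d v alternating) := fun k hk => by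
    rw [hP.closedAdjMatrix_mulVec_pathVec_apply_path (by simp [alternating]) hk fun _ => hlast,
      alternating_add_add]
  have hker := hP.mulVec_eq_zero_of_dotProduct_eq_zero hrank hvanish (hvanish.pathVec_dotProduct _)
  rw [← closedAdjMatrix_mulVec_pathVec_apply_of_isOffPath _ hu, hker, Pi.zero_apply]

lemma IsInducedPath.mod_three_of_pathNbrs_eq_singleton (hd : d % 3 = 1) (hu : IsOffPath d v u)
    (hN : pathNbrs G d v u = {m}) : m % 3 = 0 := by
  have h := hP.sum_pathNbrs_alternating_eq_zero hrank hd hu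
  rw [hN, Finset.sum_singleton] at h
  grind [alternating]

lemma IsInducedPath.mod_three_of_pathNbrs_eq_pair_succ (hd : d % 3 = 1) (hu : IsOffPath d v u)
    (hN : pathNbrs G d v u = {m, m + 1}) : m % 3 = 1 := by
  have h := hP.sum_pathNbrs_alternating_eq_zero hrank hd hu
  rw [hN, Finset.sum_pair (by omega)] at h
  grind [alternating]

lemma IsInducedPath.mod_three_of_pathNbrs_eq_pair_add_two (hd : d % 3 = 1) (hu : IsOffPath d v u)
    (hN : pathNbrs G d v u = {m, m + 2}) : m % 3 = 2 := by
  have h := hP.sum_pathNbrs_alternating_eq_zero hrank hd hu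
  rw [hN, Finset.sum_pair (by omega)] at h
  grind [alternating]

lemma IsInducedPath.eq_of_adj_of_pathNbrs_eq (hcanon : IsCCanonical G) (hu : IsOffPath d v u)
    (hw : IsOffPath d v w) (hadj : G.Adj u w) (hN : pathNbrs G d v u = pathNbrs G d v w) :
    u = w := by
  have hker : closedAdjMatrix G *ᵥ (Pi.single u 1 - Pi.single w 1) = 0 := by
    refine hP.mulVec_eq_zero_of_dotProduct_eq_zero hrank (fun k hk => ?_) ?_
    · simp only [Matrix.mulVec_sub, Pi.sub_apply, hu.closedAdjMatrix_mulVec_single_apply_path hk,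
        hw.closedAdjMatrix_mulVec_single_apply_path hk, hN, sub_self]
    · simp [Matrix.mulVec_sub, sub_dotProduct, closedAdjMatrix_apply, hadj, hadj.symm]
  refine hcanon u w fun z => ?_
  have h := congrFun hker z
  simp only [Matrix.mulVec_sub, Pi.sub_apply, closedAdjMatrix_mulVec_single_apply,
    Pi.zero_apply, sub_eq_zero, G.adj_comm z] at h
  grind

lemma IsInducedPath.sq_one_sub_sum_eq_of_adj (hu : IsOffPath d v u) (hw : IsOffPath d v w)
    (ha : IsPathSolution G d v u a) (hb : IsPathSolution G d v w b) (hadj : G.Adj u w) :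
    (1 - ∑ i ∈ pathNbrs G d v w, a i) ^ 2 =
      (1 - ∑ i ∈ pathNbrs G d v w, b i) * (1 - ∑ i ∈ pathNbrs G d v u, a i) := by
  have h := hP.sq_dotProduct_mulVec_eq hrank
    (fun k hk => hb.vanishesOnPath hP hw k hk.le) (fun k hk => ha.vanishesOnPath hP hu k hk.le)
  rwa [ha.dotProduct_mulVec_eq hP hu hw (.inr hadj.symm),
    hb.dotProduct_mulVec_eq hP hw hw (.inl rfl), ha.dotProduct_mulVec_eq hP hu hu (.inl rfl)] at h

lemma IsInducedPath.sum_alternatingUpTo_eq_one_of_adj (hu : IsOffPath d v u) (hw : IsOffPath d v w)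
    (hN : pathNbrs G d v u = {m, m + 1}) (hm : m % 3 = 1) (hadj : G.Adj u w) :
    ∑ i ∈ pathNbrs G d v w, alternatingUpTo m i = 1 := by
  have hsol := isPathSolution_of_pathNbrs_eq_pair_succ hN hm
  have hself : ∑ i ∈ pathNbrs G d v u, alternatingUpTo m i = 1 := by
    rw [hN, Finset.sum_pair (by omega)]
    grind [alternatingUpTo, alternating]
  have hker := hP.mulVec_eq_zero_of_dotProduct_eq_zero hrank (hsol.vanishesOnPath hP hu)
    (by rw [hsol.dotProduct_mulVec_eq hP hu hu (.inl rfl), hself, sub_self])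
  have h := closedAdjMatrix_mulVec_single_sub_pathVec_apply (alternatingUpTo m) hw (.inr hadj.symm)
  rw [hker, Pi.zero_apply] at h
  linarith

lemma IsInducedPath.not_adj_of_pair_succ_of_singleton (hu : IsOffPath d v u)
    (hw : IsOffPath d v w) (hNu : pathNbrs G d v u = {m, m + 1}) (hm : m % 3 = 1)
    (hNw : pathNbrs G d v w = {j}) (hj : j % 3 = 0) : ¬ G.Adj u w := fun hadj => by
  have h := hP.sum_alternatingUpTo_eq_one_of_adj hrank hu hw hNu hm hadj
  rw [hNw, Finset.sum_singleton] at h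
  grind [alternatingUpTo, alternating]

lemma IsInducedPath.not_adj_of_pair_succ_of_pair_add_two (hu : IsOffPath d v u)
    (hw : IsOffPath d v w) (hNu : pathNbrs G d v u = {m, m + 1}) (hm : m % 3 = 1)
    (hNw : pathNbrs G d v w = {j, j + 2}) (hj : j % 3 = 2) : ¬ G.Adj u w := fun hadj => by
  have h := hP.sum_alternatingUpTo_eq_one_of_adj hrank hu hw hNu hm hadj
  rw [hNw, Finset.sum_pair (by omega)] at h
  grind [alternatingUpTo, alternating]

lemma IsInducedPath.not_adj_of_pair_succ_of_pair_succ (hu : IsOffPath d v u)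
    (hw : IsOffPath d v w) (hNu : pathNbrs G d v u = {m, m + 1}) (hm : m % 3 = 1)
    (hNw : pathNbrs G d v w = {j, j + 1}) (hj : j % 3 = 1) (hmj : m ≠ j) :
    ¬ G.Adj u w := fun hadj => by
  have h := hP.sum_alternatingUpTo_eq_one_of_adj hrank hu hw hNu hm hadj
  rw [hNw, Finset.sum_pair (by omega)] at h
  grind [alternatingUpTo, alternating]

lemma IsInducedPath.not_adj_of_singleton_of_pair_add_two (hu : IsOffPath d v u)
    (hw : IsOffPath d v w) (hNu : pathNbrs G d v u = {m}) (hm : m % 3 = 0)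
    (hNw : pathNbrs G d v w = {j, j + 2}) (hj : j % 3 = 2) : ¬ G.Adj u w := fun hadj => by
  have h := hP.sq_one_sub_sum_eq_of_adj hrank hw hu
    (isPathSolution_of_pathNbrs_eq_pair_add_two hNw hj)
    (isPathSolution_of_pathNbrs_eq_singleton hNu hm) hadj.symm
  rw [hNu, hNw, one_sub_sum_alternatingUpTo_add_ite hj hj, if_pos rfl, Finset.sum_singleton,
    Finset.sum_singleton] at h
  have hzero (k : ℕ) : alternatingUpTo k m = 0 := by
    simp [alternatingUpTo, alternating, hm]
  rw [hzero, hzero] at h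
  split_ifs at h <;> norm_num at h

lemma IsInducedPath.not_adj_of_pair_add_two_of_pair_add_two (hu : IsOffPath d v u)
    (hw : IsOffPath d v w) (hNu : pathNbrs G d v u = {m, m + 2}) (hm : m % 3 = 2)
    (hNw : pathNbrs G d v w = {j, j + 2}) (hj : j % 3 = 2) (hmj : m ≠ j) :
    ¬ G.Adj u w := fun hadj => by
  have h := hP.sq_one_sub_sum_eq_of_adj hrank hu hw
    (isPathSolution_of_pathNbrs_eq_pair_add_two hNu hm)
    (isPathSolution_of_pathNbrs_eq_pair_add_two hNw hj) hadj
  rw [hNu, hNw, one_sub_sum_alternatingUpTo_add_ite hm hj,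
    one_sub_sum_alternatingUpTo_add_ite hm hm, one_sub_sum_alternatingUpTo_add_ite hj hj,
    if_neg hmj, if_pos rfl, if_pos rfl] at h
  norm_num at h

end Rank

lemma IsGeodesicPath.pathNbrs_of_card_eq_two (hP : IsGeodesicPath G d v)
    (hrank : (closedAdjMatrix G).rank ≤ d + 1) (hd : d % 3 = 1) (hu : IsOffPath d v u)
    (hcard : (pathNbrs G d v u).card = 2) :
    ∃ m, (pathNbrs G d v u = {m, m + 1} ∧ m % 3 = 1) ∨
      (pathNbrs G d v u = {m, m + 2} ∧ m % 3 = 2) := by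
  have hI := hP.isInducedPath
  obtain ⟨m, hN | hN⟩ := hP.exists_pathNbrs_eq_of_card_eq_two hcard
  · exact ⟨m, .inl ⟨hN, hI.mod_three_of_pathNbrs_eq_pair_succ hrank hd hu hN⟩⟩
  · exact ⟨m, .inr ⟨hN, hI.mod_three_of_pathNbrs_eq_pair_add_two hrank hd hu hN⟩⟩

end Path

theorem stmt_19_general {V : Type*} [Fintype V] {G : SimpleGraph V} {d : ℕ} {v : ℕ → V}
    (hcanon : IsCCanonical G) (hd : d % 3 = 1) (hP : IsGeodesicPath G d v)
    (hmult : Fintype.card V ≤ multNegOne G + d + 1) :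
    (∀ u, IsOffPath d v u → ∀ m, pathNbrs G d v u = {m, m + 1} → m % 3 = 1) ∧
    (∀ x u, IsOffPath d v x → IsOffPath d v u →
      (pathNbrs G d v x).card = 1 → (pathNbrs G d v u).card = 2 → ¬ G.Adj x u) ∧
    (∀ u w, u ≠ w → IsOffPath d v u → IsOffPath d v w →
      (pathNbrs G d v u).card = 2 → (pathNbrs G d v w).card = 2 → ¬ G.Adj u w) := by
  have hI := hP.isInducedPath
  have hrank : (closedAdjMatrix G).rank ≤ d + 1 := by
    have := rank_closedAdjMatrix_add_multNegOne (G := G)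
    omega
  have hpair {u} (hu : IsOffPath d v u) (hcard : (pathNbrs G d v u).card = 2) :=
    hP.pathNbrs_of_card_eq_two hrank hd hu hcard
  refine ⟨fun u hu m => hI.mod_three_of_pathNbrs_eq_pair_succ hrank hd hu, ?_, ?_⟩
  · intro x u hx hu hcx hcu
    obtain ⟨m, hNx⟩ := Finset.card_eq_one.1 hcx
    have hm := hI.mod_three_of_pathNbrs_eq_singleton hrank hd hx hNx
    obtain ⟨j, ⟨hNu, hj⟩ | ⟨hNu, hj⟩⟩ := hpair hu hcu
    · exact fun h => hI.not_adj_of_pair_succ_of_singleton hrank hu hx hNu hj hNx hm h.symm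
    · exact hI.not_adj_of_singleton_of_pair_add_two hrank hx hu hNx hm hNu hj
  · intro u w hne hu hw hcu hcw hadj
    have hN : pathNbrs G d v u ≠ pathNbrs G d v w :=
      fun hN => hne (hI.eq_of_adj_of_pathNbrs_eq hrank hcanon hu hw hadj hN)
    obtain ⟨m, ⟨hNu, hm⟩ | ⟨hNu, hm⟩⟩ := hpair hu hcu <;>
      obtain ⟨j, ⟨hNw, hj⟩ | ⟨hNw, hj⟩⟩ := hpair hw hcw
    · have hmj : m ≠ j := fun h => hN (by rw [hNu, hNw, h])
      exact hI.not_adj_of_pair_succ_of_pair_succ hrank hu hw hNu hm hNw hj hmj hadj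
    · exact hI.not_adj_of_pair_succ_of_pair_add_two hrank hu hw hNu hm hNw hj hadj
    · exact hI.not_adj_of_pair_succ_of_pair_add_two hrank hw hu hNw hj hNu hm hadj.symm
    · have hmj : m ≠ j := fun h => hN (by rw [hNu, hNw, h])
      exact hI.not_adj_of_pair_add_two_of_pair_add_two hrank hu hw hNu hm hNw hj hmj hadj

theorem stmt_19 {V : Type*} [Fintype V] (G : SimpleGraph V) (n d : ℕ)
    (hconn : G.Connected)
    (hcard : Fintype.card V = n)
    (hcanon : ∀ a b : V, (∀ z : V, (z = a ∨ G.Adj a z) ↔ (z = b ∨ G.Adj b z)) → a = b)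
    (hd3 : d % 3 = 1)
    (hdiam : ∀ a b : V, G.dist a b ≤ d)
    (v : ℕ → V)
    (hpath : ∀ i ∈ Finset.Icc 1 (d + 1), ∀ j ∈ Finset.Icc 1 (d + 1),
      G.dist (v i) (v j) = max i j - min i j)
    (hmult : multNegOne G = n - d - 1) :
    (∀ u : V, (∀ i ∈ Finset.Icc 1 (d + 1), u ≠ v i) → ∀ m : ℕ,
      pathNbrs G d v u = {m, m + 1} → m % 3 = 1) ∧
    (∀ x u : V, (∀ i ∈ Finset.Icc 1 (d + 1), x ≠ v i) →
      (∀ i ∈ Finset.Icc 1 (d + 1), u ≠ v i) →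
      (pathNbrs G d v x).card = 1 → (pathNbrs G d v u).card = 2 → ¬ G.Adj x u) ∧
    (∀ u w : V, u ≠ w → (∀ i ∈ Finset.Icc 1 (d + 1), u ≠ v i) →
      (∀ i ∈ Finset.Icc 1 (d + 1), w ≠ v i) →
      (pathNbrs G d v u).card = 2 → (pathNbrs G d v w).card = 2 → ¬ G.Adj u w) :=
  stmt_19_general hcanon hd3 hpath (by omega)
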